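/- Fix positive reals λ₁, λ₂. Then as (x₁,x₂) tends to (0,0) from within the positive quadrant (with x₁, x₂ small enough that λ₁x₁ + λ₂x₂ < 1 and x₁, x₂ ≤ 1), the correlation function Ψ(x₁, x₂; λ₁x₁, λ₂x₂) tends to binom(λ₁+λ₂, λ₁)⁻¹, where binom denotes the generalized binomial coefficient. -/

import Mathlib

open MeasureTheory Real Filter Topology

noncomputable def betaFn (a b : ℝ) : ℝ := Real.Gamma a * Real.Gamma b / Real.Gamma (a + b)

noncomputable def incBeta (z a b : ℝ) : ℝ := ∫ t in (0:ℝ)..z, t ^ (a - 1) * (1 - t) ^ (b - 1)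

noncomputable def regIncBeta (z a b : ℝ) : ℝ := incBeta z a b / betaFn a b

noncomputable def mvBeta (ρ₁ ρ₂ ρ₀ : ℝ) : ℝ :=
  Real.Gamma ρ₁ * Real.Gamma ρ₂ * Real.Gamma ρ₀ / Real.Gamma (ρ₁ + ρ₂ + ρ₀)

noncomputable def genBinom (x y : ℝ) : ℝ :=
  Real.Gamma (x + 1) / (Real.Gamma (y + 1) * Real.Gamma (x - y + 1))

noncomputable def Psi (x₁ x₂ ρ₁ ρ₂ : ℝ) : ℝ :=
  (x₁ * x₂)⁻¹ * (mvBeta ρ₁ ρ₂ (1 - ρ₁ - ρ₂))⁻¹ *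
    ∫ p in {p : ℝ × ℝ | 0 ≤ p.1 ∧ 0 ≤ p.2 ∧ p.1 + p.2 ≤ 1},
      regIncBeta p.1 ρ₁ (1 - ρ₁) ^ (1 / x₁ - 1) *
        regIncBeta p.2 ρ₂ (1 - ρ₂) ^ (1 / x₂ - 1) *
        p.1 ^ (ρ₁ - 1) * p.2 ^ (ρ₂ - 1) * (1 - p.1 - p.2) ^ (-ρ₁ - ρ₂)

/-!
Write `ρᵢ = aᵢ xᵢ`. Comparing the integrand of the incomplete Beta function with `t ^ (ρ - 1)`
gives `sinc (π ρ) * t ^ ρ ≤ I(t; ρ, 1 - ρ) ≤ t ^ ρ`, and raising this to the power `1 / x - 1`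
turns the factor `I ^ (1 / x - 1) * t ^ (ρ - 1)` of the integrand of `Ψ` into `t ^ (a - 1)`, up to
a factor between `sinc (π ρ) ^ (1 / x - 1)` and `1`. As `1 - sinc (π ρ) = O(x ^ 2)`, that factor
tends to `1`. Hence `Ψ` is squeezed onto a ratio of Dirichlet integrals,
`B(a₁, a₂, c) / (x₁ x₂ B(ρ₁, ρ₂, c))` with `c = 1 - ρ₁ - ρ₂`. Multiplying both Beta values by their
first two arguments removes the poles at `0`, and the ratio becomes continuous at `x₁ = x₂ = 0`.
-/

open Set

section Beta

variable {a b s t : ℝ}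

lemma betaFn_pos (ha : 0 < a) (hb : 0 < b) : 0 < betaFn a b :=
  ProbabilityTheory.beta_pos ha hb

lemma integral_rpow_mul_sub_rpow (ha : 0 < a) (hb : 0 < b) (hs : 0 < s) :
    ∫ y in (0 : ℝ)..s, y ^ (a - 1) * (s - y) ^ (b - 1) = s ^ (a + b - 1) * betaFn a b := by
  have hcast : ∫ y in (0 : ℝ)..s, (y : ℂ) ^ ((a : ℂ) - 1) * ((s : ℂ) - y) ^ ((b : ℂ) - 1) =
      ((∫ y in (0 : ℝ)..s, y ^ (a - 1) * (s - y) ^ (b - 1) : ℝ) : ℂ) := by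
    rw [← intervalIntegral.integral_ofReal]
    refine intervalIntegral.integral_congr fun y hy => ?_
    rw [uIcc_of_le hs.le] at hy
    simp [Complex.ofReal_cpow hy.1, Complex.ofReal_cpow (sub_nonneg.2 hy.2)]
  have hscaled := Complex.betaIntegral_scaled a b hs
  rw [Complex.betaIntegral_eq_Gamma_mul_div _ _ (by simpa using ha) (by simpa using hb),
    hcast] at hscaled
  apply Complex.ofReal_injective
  rw [hscaled, betaFn]
  simp [Complex.ofReal_cpow hs.le, ← Complex.Gamma_ofReal]

lemma intervalIntegrable_rpow_mul_sub_rpow (ha : 0 < a) (hb : 0 < b) (hs : 0 < s) :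
    IntervalIntegrable (fun y : ℝ => y ^ (a - 1) * (s - y) ^ (b - 1)) volume 0 s := by
  apply intervalIntegral.intervalIntegrable_of_integral_ne_zero
  rw [integral_rpow_mul_sub_rpow ha hb hs]
  exact (mul_pos (rpow_pos_of_pos hs _) (betaFn_pos ha hb)).ne'

lemma intervalIntegrable_incBeta (ha : 0 < a) (hb : 0 < b) (ht : t ∈ Icc 0 1) :
    IntervalIntegrable (fun s : ℝ => s ^ (a - 1) * (1 - s) ^ (b - 1)) volume 0 t := by
  refine (intervalIntegrable_rpow_mul_sub_rpow ha hb one_pos).mono_set ?_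
  rw [uIcc_of_le ht.1, uIcc_of_le zero_le_one]
  exact Icc_subset_Icc_right ht.2

lemma incBeta_one (ha : 0 < a) (hb : 0 < b) : incBeta 1 a b = betaFn a b := by
  simpa [incBeta] using integral_rpow_mul_sub_rpow ha hb one_pos

lemma continuousOn_regIncBeta (ha : 0 < a) (hb : 0 < b) :
    ContinuousOn (fun t => regIncBeta t a b) (Icc 0 1) := by
  have hint := intervalIntegrable_incBeta ha hb (right_mem_Icc.2 zero_le_one)
  rw [intervalIntegrable_iff_integrableOn_Icc_of_le zero_le_one, ← uIcc_of_le zero_le_one] at hint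
  rw [← uIcc_of_le zero_le_one]
  exact (intervalIntegral.continuousOn_primitive_interval hint).div_const _

lemma regIncBeta_nonneg (ha : 0 < a) (hb : 0 < b) (ht : t ∈ Icc 0 1) : 0 ≤ regIncBeta t a b :=
  div_nonneg
    (intervalIntegral.integral_nonneg ht.1 fun _ hs =>
      mul_nonneg (rpow_nonneg hs.1 _) (rpow_nonneg (sub_nonneg.2 (hs.2.trans ht.2)) _))
    (betaFn_pos ha hb).le

lemma incBeta_le_rpow_mul_betaFn (ha : 0 < a) (hb : 0 < b) (hb_le : b ≤ 1) (ht : t ∈ Icc 0 1) :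
    incBeta t a b ≤ t ^ a * betaFn a b := by
  obtain rfl | ht₀ := ht.1.eq_or_lt
  · simp [incBeta, ha.ne']
  have hone := right_mem_Icc.2 (zero_le_one' ℝ)
  calc incBeta t a b
      = t * ∫ u in (0 : ℝ)..1, (t * u) ^ (a - 1) * (1 - t * u) ^ (b - 1) := by
        simpa [incBeta] using (intervalIntegral.smul_integral_comp_mul_left
          (fun s : ℝ => s ^ (a - 1) * (1 - s) ^ (b - 1)) t (a := 0) (b := 1)).symm
    _ ≤ t * ∫ u in (0 : ℝ)..1, t ^ (a - 1) * (u ^ (a - 1) * (1 - u) ^ (b - 1)) := by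
        refine mul_le_mul_of_nonneg_left ?_ ht.1
        refine intervalIntegral.integral_mono_on_of_le_Ioo zero_le_one ?_
          ((intervalIntegrable_incBeta ha hb hone).const_mul _) fun u hu => ?_
        · simpa [ht₀.ne'] using (intervalIntegrable_incBeta ha hb ht).comp_mul_left (c := t)
        · have htu : t * u ≤ u := mul_le_of_le_one_left hu.1.le ht.2
          rw [mul_rpow ht.1 hu.1.le, mul_assoc]
          gcongr ?_ * (?_ * ?_)
          · exact rpow_nonneg hu.1.le _
          · exact rpow_le_rpow_of_nonpos (by linarith [hu.2]) (by linarith) (by linarith)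
    _ = t ^ a * betaFn a b := by
        rw [intervalIntegral.integral_const_mul, ← incBeta, incBeta_one ha hb, ← mul_assoc,
          ← rpow_one_add' ht.1 (by linarith), add_sub_cancel]

lemma regIncBeta_le_rpow (ha : 0 < a) (hb : 0 < b) (hb_le : b ≤ 1) (ht : t ∈ Icc 0 1) :
    regIncBeta t a b ≤ t ^ a :=
  (div_le_iff₀ (betaFn_pos ha hb)).2 (incBeta_le_rpow_mul_betaFn ha hb hb_le ht)

lemma rpow_div_le_incBeta (ha : 0 < a) (hb : 0 < b) (hb_le : b ≤ 1) (ht : t ∈ Icc 0 1) :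
    t ^ a / a ≤ incBeta t a b :=
  calc t ^ a / a
      = ∫ s in (0 : ℝ)..t, s ^ (a - 1) := by
        simp [integral_rpow (Or.inl (by linarith : -1 < a - 1)), ha.ne']
    _ ≤ incBeta t a b := by
        refine intervalIntegral.integral_mono_on_of_le_Ioo ht.1
          (intervalIntegral.intervalIntegrable_rpow' (by linarith))
          (intervalIntegrable_incBeta ha hb ht) fun s hs => ?_
        exact le_mul_of_one_le_right (rpow_nonneg hs.1.le _)
          (one_le_rpow_of_pos_of_le_one_of_nonpos (by linarith [hs.2, ht.2]) (by linarith [hs.1])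
            (by linarith))

lemma mul_betaFn_one_sub_inv (ha : a ≠ 0) : (a * betaFn a (1 - a))⁻¹ = sinc (π * a) := by
  rw [betaFn, Gamma_mul_Gamma_one_sub, sinc_of_ne_zero (mul_ne_zero pi_ne_zero ha),
    add_sub_cancel, Gamma_one, div_one, mul_div_assoc', inv_div, mul_comm a]

lemma sinc_pi_mul_pos (ha : 0 < a) (ha_lt : a < 1) : 0 < sinc (π * a) := by
  rw [← mul_betaFn_one_sub_inv ha.ne']
  exact inv_pos.2 (mul_pos ha (betaFn_pos ha (sub_pos.2 ha_lt)))

lemma sinc_mul_rpow_le_regIncBeta (ha : 0 < a) (ha_lt : a < 1) (ht : t ∈ Icc 0 1) :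
    sinc (π * a) * t ^ a ≤ regIncBeta t a (1 - a) := by
  have hpos := sub_pos.2 ha_lt
  calc sinc (π * a) * t ^ a
      = t ^ a / a / betaFn a (1 - a) := by
        rw [← mul_betaFn_one_sub_inv ha.ne', div_div, inv_mul_eq_div]
    _ ≤ regIncBeta t a (1 - a) := by
        have hB := (betaFn_pos ha hpos).le
        exact div_le_div_of_nonneg_right (rpow_div_le_incBeta ha hpos (by linarith) ht) hB

end Beta

section Dirichlet

variable {a b c c₁ c₂ : ℝ} {f g : ℝ → ℝ}

/-- The domain of integration of `Psi` without its two legs on the coordinate axes. Dropping this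
null set makes every factor of the integrand a power of a positive number. -/
def triangle : Set (ℝ × ℝ) := {p | 0 < p.1 ∧ 0 < p.2 ∧ p.1 + p.2 ≤ 1}

lemma measurableSet_triangle : MeasurableSet triangle :=
  (measurableSet_lt measurable_const measurable_fst).inter
    ((measurableSet_lt measurable_const measurable_snd).inter
      (measurableSet_le (measurable_fst.add measurable_snd) measurable_const))

lemma triangle_subset : triangle ⊆ Ioc 0 1 ×ˢ Ioc 0 1 := by
  rintro p ⟨h₁, h₂, h⟩
  exact ⟨⟨h₁, by linarith⟩, ⟨h₂, by linarith⟩⟩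

lemma closed_triangle_ae_eq_triangle :
    {p : ℝ × ℝ | 0 ≤ p.1 ∧ 0 ≤ p.2 ∧ p.1 + p.2 ≤ 1} =ᵐ[volume] triangle := by
  have hfst : ∀ᵐ p : ℝ × ℝ, p.1 ≠ 0 := Measure.quasiMeasurePreserving_fst.ae (volume.ae_ne 0)
  have hsnd : ∀ᵐ p : ℝ × ℝ, p.2 ≠ 0 := Measure.quasiMeasurePreserving_snd.ae (volume.ae_ne 0)
  filter_upwards [hfst, hsnd] with p h₁ h₂
  refine propext ?_
  change (0 ≤ p.1 ∧ 0 ≤ p.2 ∧ p.1 + p.2 ≤ 1) ↔ (0 < p.1 ∧ 0 < p.2 ∧ p.1 + p.2 ≤ 1)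
  rw [h₁.symm.le_iff_lt, h₂.symm.le_iff_lt]

lemma preimage_mk_triangle {x : ℝ} (hx : 0 < x) : Prod.mk x ⁻¹' triangle = Ioc 0 (1 - x) := by
  ext y
  simp [triangle, hx, le_sub_iff_add_le']

lemma preimage_mk_triangle_eq_empty {x : ℝ} (hx : x ∉ Ioo 0 1) : Prod.mk x ⁻¹' triangle = ∅ := by
  ext y
  simp only [triangle, mem_preimage, mem_ofPred_eq, mem_empty_iff_false, iff_false]
  rintro ⟨hx₀, hy, hxy⟩
  exact hx ⟨hx₀, by linarith⟩

/-- The unnormalized density of the Dirichlet distribution on the triangle, in the coordinates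
`(t₁, t₂)` of the barycentric point `(t₁, t₂, 1 - t₁ - t₂)`. -/
noncomputable def dirichletKernel (a b c : ℝ) (p : ℝ × ℝ) : ℝ :=
  p.1 ^ (a - 1) * p.2 ^ (b - 1) * (1 - p.1 - p.2) ^ (c - 1)

lemma measurable_dirichletKernel : Measurable (dirichletKernel a b c) := by
  unfold dirichletKernel
  fun_prop

lemma dirichletKernel_nonneg {p : ℝ × ℝ} (hp : p ∈ triangle) : 0 ≤ dirichletKernel a b c p := by
  obtain ⟨h₁, h₂, h⟩ := hp
  have h₃ : 0 ≤ 1 - p.1 - p.2 := by linarith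
  unfold dirichletKernel
  positivity

lemma integrable_indicator_dirichletKernel_mk (hb : 0 < b) (hc : 0 < c) (x : ℝ) :
    Integrable (fun y => triangle.indicator (dirichletKernel a b c) (x, y)) := by
  simp_rw [← indicator_comp_right (Prod.mk x)]
  by_cases hx : x ∈ Ioo 0 1
  · have hx' : 0 < 1 - x := sub_pos.2 hx.2
    rw [preimage_mk_triangle hx.1, integrable_indicator_iff measurableSet_Ioc,
      ← intervalIntegrable_iff_integrableOn_Ioc_of_le hx'.le]
    simpa only [Function.comp_def, dirichletKernel, mul_assoc] using
      (intervalIntegrable_rpow_mul_sub_rpow hb hc hx').const_mul (x ^ (a - 1))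
  · simp [preimage_mk_triangle_eq_empty hx]

lemma integral_indicator_dirichletKernel_mk (hb : 0 < b) (hc : 0 < c) (x : ℝ) :
    ∫ y, triangle.indicator (dirichletKernel a b c) (x, y) =
      (Ioo 0 1).indicator (fun x => x ^ (a - 1) * (1 - x) ^ (b + c - 1) * betaFn b c) x := by
  simp_rw [← indicator_comp_right (Prod.mk x)]
  by_cases hx : x ∈ Ioo 0 1
  · have hx' : 0 < 1 - x := sub_pos.2 hx.2
    rw [preimage_mk_triangle hx.1, integral_indicator measurableSet_Ioc,
      ← intervalIntegral.integral_of_le hx'.le, indicator_of_mem hx, mul_assoc,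
      ← integral_rpow_mul_sub_rpow hb hc hx', ← intervalIntegral.integral_const_mul]
    simp only [Function.comp_def, dirichletKernel, mul_assoc]
  · simp [preimage_mk_triangle_eq_empty hx, hx]

lemma integrableOn_dirichletKernel (ha : 0 < a) (hb : 0 < b) (hc : 0 < c) :
    IntegrableOn (dirichletKernel a b c) triangle := by
  rw [← integrable_indicator_iff measurableSet_triangle, Measure.volume_eq_prod,
    integrable_prod_iff
      (measurable_dirichletKernel.indicator measurableSet_triangle).aestronglyMeasurable]
  refine ⟨.of_forall (integrable_indicator_dirichletKernel_mk hb hc), ?_⟩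
  simp_rw [norm_of_nonneg (indicator_nonneg (fun _ => dirichletKernel_nonneg) _),
    integral_indicator_dirichletKernel_mk hb hc]
  rw [integrable_indicator_iff measurableSet_Ioo,
    ← intervalIntegrable_iff_integrableOn_Ioo_of_le zero_le_one]
  exact (intervalIntegrable_incBeta ha (add_pos hb hc) (right_mem_Icc.2 zero_le_one)).mul_const _

lemma betaFn_mul_betaFn (hbc : 0 < b + c) : betaFn a (b + c) * betaFn b c = mvBeta a b c := by
  have := (Gamma_pos_of_pos hbc).ne'
  rw [betaFn, betaFn, mvBeta, ← add_assoc]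
  field_simp

lemma mvBeta_pos (ha : 0 < a) (hb : 0 < b) (hc : 0 < c) : 0 < mvBeta a b c := by
  have := Gamma_pos_of_pos ha
  have := Gamma_pos_of_pos hb
  have := Gamma_pos_of_pos hc
  have := Gamma_pos_of_pos (show 0 < a + b + c by positivity)
  unfold mvBeta
  positivity

lemma setIntegral_dirichletKernel (ha : 0 < a) (hb : 0 < b) (hc : 0 < c) :
    ∫ p in triangle, dirichletKernel a b c p = mvBeta a b c := by
  have hint := integrableOn_dirichletKernel ha hb hc
  rw [← integrable_indicator_iff measurableSet_triangle, Measure.volume_eq_prod] at hint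
  rw [← integral_indicator measurableSet_triangle, Measure.volume_eq_prod, integral_prod _ hint]
  simp_rw [integral_indicator_dirichletKernel_mk hb hc]
  rw [integral_indicator measurableSet_Ioo, ← integral_Ioc_eq_integral_Ioo,
    ← intervalIntegral.integral_of_le zero_le_one, intervalIntegral.integral_mul_const, ← incBeta,
    incBeta_one ha (add_pos hb hc), betaFn_mul_betaFn (add_pos hb hc)]

lemma integrableOn_triangle_of_le_rpow (ha : 0 < a) (hb : 0 < b) (hc : 0 < c)
    (hf : AEStronglyMeasurable f (volume.restrict (Ioc 0 1)))
    (hg : AEStronglyMeasurable g (volume.restrict (Ioc 0 1)))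
    (hf_le : ∀ t ∈ Ioc (0 : ℝ) 1, ‖f t‖ ≤ t ^ (a - 1))
    (hg_le : ∀ t ∈ Ioc (0 : ℝ) 1, ‖g t‖ ≤ t ^ (b - 1)) :
    IntegrableOn (fun p => f p.1 * g p.2 * (1 - p.1 - p.2) ^ (c - 1)) triangle := by
  have hfg : AEStronglyMeasurable (fun p => f p.1 * g p.2) (volume.restrict triangle) := by
    refine AEStronglyMeasurable.mono_set triangle_subset ?_
    rw [Measure.volume_eq_prod, ← Measure.prod_restrict]
    exact hf.comp_fst.mul hg.comp_snd
  have hrpow : Measurable fun p : ℝ × ℝ => (1 - p.1 - p.2) ^ (c - 1) := by fun_prop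
  refine (integrableOn_dirichletKernel ha hb hc).mono' (hfg.mul hrpow.aestronglyMeasurable) ?_
  filter_upwards [ae_restrict_mem measurableSet_triangle] with p hp
  obtain ⟨h₁, h₂⟩ := triangle_subset hp
  have h₃ : 0 ≤ (1 - p.1 - p.2) ^ (c - 1) := rpow_nonneg (by linarith [hp.2.2]) _
  rw [norm_mul, norm_mul, norm_of_nonneg h₃, dirichletKernel]
  gcongr
  exacts [rpow_nonneg h₁.1.le _, hf_le _ h₁, hg_le _ h₂]

lemma setIntegral_triangle_le_mvBeta (ha : 0 < a) (hb : 0 < b) (hc : 0 < c)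
    (hfg : IntegrableOn (fun p => f p.1 * g p.2 * (1 - p.1 - p.2) ^ (c - 1)) triangle)
    (hf_le : ∀ t ∈ Ioc (0 : ℝ) 1, ‖f t‖ ≤ t ^ (a - 1))
    (hg_le : ∀ t ∈ Ioc (0 : ℝ) 1, ‖g t‖ ≤ t ^ (b - 1)) :
    ∫ p in triangle, f p.1 * g p.2 * (1 - p.1 - p.2) ^ (c - 1) ≤ mvBeta a b c := by
  rw [← setIntegral_dirichletKernel ha hb hc]
  refine setIntegral_mono_on hfg (integrableOn_dirichletKernel ha hb hc)
    measurableSet_triangle fun p hp => ?_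
  obtain ⟨h₁, h₂⟩ := triangle_subset hp
  have hle : f p.1 * g p.2 ≤ p.1 ^ (a - 1) * p.2 ^ (b - 1) :=
    (le_norm_self _).trans <| (norm_mul_le _ _).trans <|
      mul_le_mul (hf_le _ h₁) (hg_le _ h₂) (norm_nonneg _) (rpow_nonneg h₁.1.le _)
  exact mul_le_mul_of_nonneg_right hle (rpow_nonneg (by linarith [hp.2.2]) _)

lemma mul_mvBeta_le_setIntegral_triangle (ha : 0 < a) (hb : 0 < b) (hc : 0 < c)
    (hfg : IntegrableOn (fun p => f p.1 * g p.2 * (1 - p.1 - p.2) ^ (c - 1)) triangle)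
    (hc₁ : 0 ≤ c₁) (hc₂ : 0 ≤ c₂)
    (hf_ge : ∀ t ∈ Ioc (0 : ℝ) 1, c₁ * t ^ (a - 1) ≤ f t)
    (hg_ge : ∀ t ∈ Ioc (0 : ℝ) 1, c₂ * t ^ (b - 1) ≤ g t) :
    c₁ * c₂ * mvBeta a b c ≤
      ∫ p in triangle, f p.1 * g p.2 * (1 - p.1 - p.2) ^ (c - 1) := by
  rw [← setIntegral_dirichletKernel ha hb hc, ← integral_const_mul]
  refine setIntegral_mono_on ((integrableOn_dirichletKernel ha hb hc).const_mul _) hfg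
    measurableSet_triangle fun p hp => ?_
  obtain ⟨h₁, h₂⟩ := triangle_subset hp
  have hf₀ : 0 ≤ c₁ * p.1 ^ (a - 1) := mul_nonneg hc₁ (rpow_nonneg h₁.1.le _)
  have hg₀ : 0 ≤ c₂ * p.2 ^ (b - 1) := mul_nonneg hc₂ (rpow_nonneg h₂.1.le _)
  calc c₁ * c₂ * dirichletKernel a b c p
      = c₁ * p.1 ^ (a - 1) * (c₂ * p.2 ^ (b - 1)) * (1 - p.1 - p.2) ^ (c - 1) := by
        rw [dirichletKernel]
        ring
    _ ≤ f p.1 * g p.2 * (1 - p.1 - p.2) ^ (c - 1) :=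
        mul_le_mul_of_nonneg_right
          (mul_le_mul (hf_ge _ h₁) (hg_ge _ h₂) hg₀ (hf₀.trans (hf_ge _ h₁)))
          (rpow_nonneg (by linarith [hp.2.2]) _)

end Dirichlet

section PsiWeight

variable {x a t ρ : ℝ}

/-- The factor of the integrand of `Psi` that depends on one of the two variables. -/
noncomputable def psiWeight (x ρ t : ℝ) : ℝ :=
  regIncBeta t ρ (1 - ρ) ^ (1 / x - 1) * t ^ (ρ - 1)

lemma one_div_sub_one_nonneg (hx : x ∈ Ioc 0 1) : 0 ≤ 1 / x - 1 :=
  sub_nonneg.2 ((one_le_div₀ hx.1).2 hx.2)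

lemma aestronglyMeasurable_psiWeight (hx : x ∈ Ioc 0 1) (hρ : ρ ∈ Ioo 0 1) :
    AEStronglyMeasurable (psiWeight x ρ) (volume.restrict (Ioc 0 1)) := by
  refine ContinuousOn.aestronglyMeasurable ?_ measurableSet_Ioc
  exact (((continuousOn_regIncBeta hρ.1 (sub_pos.2 hρ.2)).mono Ioc_subset_Icc_self).rpow_const
    fun _ _ => Or.inr (one_div_sub_one_nonneg hx)).mul
    (continuousOn_id.rpow_const fun _ ht => Or.inl ht.1.ne')

lemma psiWeight_nonneg (hρ : ρ ∈ Ioo 0 1) (ht : t ∈ Icc 0 1) : 0 ≤ psiWeight x ρ t :=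
  mul_nonneg (rpow_nonneg (regIncBeta_nonneg hρ.1 (sub_pos.2 hρ.2) ht) _) (rpow_nonneg ht.1 _)

lemma rpow_mul_rpow_rpow_one_div_sub_one (hx : x ≠ 0) (ht : 0 < t) :
    (t ^ (a * x)) ^ (1 / x - 1) * t ^ (a * x - 1) = t ^ (a - 1) := by
  rw [← rpow_mul ht.le, ← rpow_add ht]
  congr 1
  field_simp
  ring

lemma norm_psiWeight_le_rpow (hx : x ∈ Ioc 0 1) (hρ : a * x ∈ Ioo 0 1) (ht : t ∈ Ioc 0 1) :
    ‖psiWeight x (a * x) t‖ ≤ t ^ (a - 1) := by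
  have htI := Ioc_subset_Icc_self ht
  have hρ' : 0 < 1 - a * x := sub_pos.2 hρ.2
  rw [norm_of_nonneg (psiWeight_nonneg hρ htI),
    ← rpow_mul_rpow_rpow_one_div_sub_one hx.1.ne' ht.1]
  exact mul_le_mul_of_nonneg_right
    (rpow_le_rpow (regIncBeta_nonneg hρ.1 hρ' htI)
      (regIncBeta_le_rpow hρ.1 hρ' (by linarith [hρ.1]) htI)
      (one_div_sub_one_nonneg hx))
    (rpow_nonneg ht.1.le _)

lemma sinc_rpow_mul_rpow_le_psiWeight (hx : x ∈ Ioc 0 1) (hρ : a * x ∈ Ioo 0 1)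
    (ht : t ∈ Ioc 0 1) :
    sinc (π * (a * x)) ^ (1 / x - 1) * t ^ (a - 1) ≤ psiWeight x (a * x) t := by
  have hsinc := (sinc_pi_mul_pos hρ.1 hρ.2).le
  have hrpow : 0 ≤ t ^ (a * x) := rpow_nonneg ht.1.le _
  rw [← rpow_mul_rpow_rpow_one_div_sub_one hx.1.ne' ht.1, ← mul_assoc, ← mul_rpow hsinc hrpow]
  exact mul_le_mul_of_nonneg_right
    (rpow_le_rpow (mul_nonneg hsinc hrpow)
      (sinc_mul_rpow_le_regIncBeta hρ.1 hρ.2 (Ioc_subset_Icc_self ht))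
      (one_div_sub_one_nonneg hx))
    (rpow_nonneg ht.1.le _)

end PsiWeight

section NormalizedMvBeta

variable {a b c : ℝ}

/-- The multivariate Beta function multiplied by its first two arguments, `a b B(a, b, c)`. It is
written with shifted Gamma functions so that it takes the correct value also at `a = 0` and
`b = 0`. -/
noncomputable def normalizedMvBeta (a b c : ℝ) : ℝ :=
  Gamma (a + 1) * Gamma (b + 1) * Gamma c / Gamma (a + b + c)

lemma mul_mvBeta (ha : a ≠ 0) (hb : b ≠ 0) : a * b * mvBeta a b c = normalizedMvBeta a b c := by
  rw [mvBeta, normalizedMvBeta, Gamma_add_one ha, Gamma_add_one hb]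
  ring

lemma normalizedMvBeta_one : normalizedMvBeta a b 1 = (genBinom (a + b) a)⁻¹ := by
  simp [normalizedMvBeta, genBinom]

lemma tendsto_normalizedMvBeta {ι : Type*} {l : Filter ι} {u v w : ι → ℝ}
    (hu : Tendsto u l (𝓝 a)) (hv : Tendsto v l (𝓝 b)) (hw : Tendsto w l (𝓝 c))
    (ha : 0 ≤ a) (hb : 0 ≤ b) (hc : 0 < c) :
    Tendsto (fun i => normalizedMvBeta (u i) (v i) (w i)) l (𝓝 (normalizedMvBeta a b c)) := by
  have hGamma {y : ℝ} (hy : 0 < y) : ContinuousAt Gamma y :=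
    (differentiableAt_Gamma fun m => by linarith [m.cast_nonneg (α := ℝ)]).continuousAt
  have habc : 0 < a + b + c := by linarith
  exact (((((hGamma (by linarith)).tendsto.comp (hu.add_const 1)).mul
    ((hGamma (by linarith)).tendsto.comp (hv.add_const 1))).mul
    ((hGamma hc).tendsto.comp hw)).div
    ((hGamma habc).tendsto.comp ((hu.add hv).add hw)) (Gamma_pos_of_pos habc).ne')

end NormalizedMvBeta

section PsiBounds

variable {x₁ x₂ a₁ a₂ ρ₁ ρ₂ : ℝ}

lemma Psi_eq_setIntegral_triangle :
    Psi x₁ x₂ ρ₁ ρ₂ = (x₁ * x₂)⁻¹ * (mvBeta ρ₁ ρ₂ (1 - ρ₁ - ρ₂))⁻¹ *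
      ∫ p in triangle,
        psiWeight x₁ ρ₁ p.1 * psiWeight x₂ ρ₂ p.2 * (1 - p.1 - p.2) ^ (1 - ρ₁ - ρ₂ - 1) := by
  rw [Psi, setIntegral_congr_set closed_triangle_ae_eq_triangle]
  congr 2 with p
  rw [psiWeight, psiWeight, show 1 - ρ₁ - ρ₂ - 1 = -ρ₁ - ρ₂ by ring]
  ring

/-- The value of `Psi x₁ x₂ (a₁ * x₁) (a₂ * x₂)` when each weight `psiWeight xᵢ (aᵢ * xᵢ) t` is
replaced by the power `t ^ (aᵢ - 1)` that dominates it. -/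
noncomputable def psiMajorant (x₁ x₂ a₁ a₂ : ℝ) : ℝ :=
  normalizedMvBeta a₁ a₂ (1 - a₁ * x₁ - a₂ * x₂) /
    normalizedMvBeta (a₁ * x₁) (a₂ * x₂) (1 - a₁ * x₁ - a₂ * x₂)

lemma psiMajorant_eq_mul_mvBeta (hx₁ : x₁ ≠ 0) (hx₂ : x₂ ≠ 0) (ha₁ : a₁ ≠ 0) (ha₂ : a₂ ≠ 0) :
    psiMajorant x₁ x₂ a₁ a₂ =
      (x₁ * x₂)⁻¹ * (mvBeta (a₁ * x₁) (a₂ * x₂) (1 - a₁ * x₁ - a₂ * x₂))⁻¹ *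
        mvBeta a₁ a₂ (1 - a₁ * x₁ - a₂ * x₂) := by
  rw [psiMajorant, ← mul_mvBeta ha₁ ha₂, ← mul_mvBeta (mul_ne_zero ha₁ hx₁) (mul_ne_zero ha₂ hx₂)]
  field_simp

theorem Psi_mem_Icc (hx₁ : x₁ ∈ Ioc 0 1) (hx₂ : x₂ ∈ Ioc 0 1) (ha₁ : 0 < a₁) (ha₂ : 0 < a₂)
    (hsum : a₁ * x₁ + a₂ * x₂ < 1) :
    Psi x₁ x₂ (a₁ * x₁) (a₂ * x₂) ∈
      Icc (sinc (π * (a₁ * x₁)) ^ (1 / x₁ - 1) * sinc (π * (a₂ * x₂)) ^ (1 / x₂ - 1) *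
        psiMajorant x₁ x₂ a₁ a₂) (psiMajorant x₁ x₂ a₁ a₂) := by
  have hρ₁_pos : 0 < a₁ * x₁ := mul_pos ha₁ hx₁.1
  have hρ₂_pos : 0 < a₂ * x₂ := mul_pos ha₂ hx₂.1
  have hρ₁ : a₁ * x₁ ∈ Ioo 0 1 := ⟨hρ₁_pos, by linarith⟩
  have hρ₂ : a₂ * x₂ ∈ Ioo 0 1 := ⟨hρ₂_pos, by linarith⟩
  have hc : 0 < 1 - a₁ * x₁ - a₂ * x₂ := by linarith
  have hint := integrableOn_triangle_of_le_rpow ha₁ ha₂ hc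
    (aestronglyMeasurable_psiWeight hx₁ hρ₁) (aestronglyMeasurable_psiWeight hx₂ hρ₂)
    (fun _ => norm_psiWeight_le_rpow hx₁ hρ₁) (fun _ => norm_psiWeight_le_rpow hx₂ hρ₂)
  have hprefactor : 0 ≤ (x₁ * x₂)⁻¹ *
      (mvBeta (a₁ * x₁) (a₂ * x₂) (1 - a₁ * x₁ - a₂ * x₂))⁻¹ :=
    mul_nonneg (inv_nonneg.2 (mul_pos hx₁.1 hx₂.1).le)
      (inv_nonneg.2 (mvBeta_pos hρ₁.1 hρ₂.1 hc).le)
  rw [Psi_eq_setIntegral_triangle,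
    psiMajorant_eq_mul_mvBeta hx₁.1.ne' hx₂.1.ne' ha₁.ne' ha₂.ne', mul_left_comm]
  exact ⟨mul_le_mul_of_nonneg_left
      (mul_mvBeta_le_setIntegral_triangle ha₁ ha₂ hc hint
        (rpow_nonneg (sinc_pi_mul_pos hρ₁.1 hρ₁.2).le _)
        (rpow_nonneg (sinc_pi_mul_pos hρ₂.1 hρ₂.2).le _)
        (fun _ => sinc_rpow_mul_rpow_le_psiWeight hx₁ hρ₁)
        (fun _ => sinc_rpow_mul_rpow_le_psiWeight hx₂ hρ₂)) hprefactor,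
    mul_le_mul_of_nonneg_left
      (setIntegral_triangle_le_mvBeta ha₁ ha₂ hc hint
        (fun _ => norm_psiWeight_le_rpow hx₁ hρ₁) (fun _ => norm_psiWeight_le_rpow hx₂ hρ₂))
      hprefactor⟩

end PsiBounds

section Limit

variable {ι : Type*} {l : Filter ι}

lemma one_sub_sq_div_six_le_sinc (y : ℝ) : 1 - y ^ 2 / 6 ≤ sinc y := by
  obtain rfl | hy := eq_or_ne y 0
  · simp
  have habs : |1 - sin y / y| ≤ y ^ 2 / 6 := by
    rw [one_sub_div hy, abs_div, div_le_iff₀ (abs_pos.2 hy), ← sq_abs]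
    exact (abs_sub_sin_le y).trans_eq (by ring)
  rw [sinc_of_ne_zero hy]
  linarith [le_abs_self (1 - sin y / y)]

lemma sinc_rpow_mem_Icc {x y : ℝ} (hx : 0 < x) (hx_le : x ≤ 1 / 2) (hy : y ^ 2 ≤ 6) :
    sinc y ^ (1 / x - 1) ∈ Icc (1 - y ^ 2 / x) 1 := by
  have hp : 1 ≤ 1 / x - 1 := by
    rw [le_sub_iff_add_le, le_div_iff₀ hx]
    linarith
  have hbase : 0 ≤ 1 + -(y ^ 2 / 6) := by linarith
  have hsinc : 1 + -(y ^ 2 / 6) ≤ sinc y := by linarith [one_sub_sq_div_six_le_sinc y]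
  refine ⟨?_, rpow_le_one (hbase.trans hsinc) (sinc_le_one y) (by linarith)⟩
  calc 1 - y ^ 2 / x
      ≤ 1 + (1 / x - 1) * -(y ^ 2 / 6) := by
        have : 0 ≤ y ^ 2 / x := by positivity
        have : (1 / x - 1) * -(y ^ 2 / 6) = -(y ^ 2 / x / 6) + y ^ 2 / 6 := by ring
        linarith [sq_nonneg y]
    _ ≤ (1 + -(y ^ 2 / 6)) ^ (1 / x - 1) := one_add_mul_self_le_rpow_one_add (by linarith) hp
    _ ≤ sinc y ^ (1 / x - 1) := rpow_le_rpow hbase hsinc (by linarith)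

lemma tendsto_sinc_rpow_one_div_sub_one {x y : ι → ℝ} (hx : Tendsto x l (𝓝[>] 0))
    (hy : Tendsto (fun i => y i ^ 2 / x i) l (𝓝 0)) :
    Tendsto (fun i => sinc (y i) ^ (1 / x i - 1)) l (𝓝 1) := by
  have hmem : ∀ᶠ i in l, sinc (y i) ^ (1 / x i - 1) ∈ Icc (1 - y i ^ 2 / x i) 1 := by
    filter_upwards [hx.eventually (Ioc_mem_nhdsGT (show (0 : ℝ) < 1 / 2 by norm_num)),
      hy.eventually_le_const one_pos] with i hxi hyi
    rw [div_le_one hxi.1] at hyi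
    exact sinc_rpow_mem_Icc hxi.1 hxi.2 (by linarith [hxi.2])
  refine tendsto_of_tendsto_of_tendsto_of_le_of_le' ?_ tendsto_const_nhds
    (hmem.mono fun _ h => h.1) (hmem.mono fun _ h => h.2)
  simpa using hy.const_sub 1

lemma tendsto_sinc_pi_mul_rpow {x a : ι → ℝ} {lam : ℝ} (hx : Tendsto x l (𝓝[>] 0))
    (ha : Tendsto a l (𝓝 lam)) :
    Tendsto (fun i => sinc (π * (a i * x i)) ^ (1 / x i - 1)) l (𝓝 1) := by
  refine tendsto_sinc_rpow_one_div_sub_one hx ?_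
  have hlim : Tendsto (fun i => (π * a i) ^ 2 * x i) l (𝓝 ((π * lam) ^ 2 * 0)) :=
    ((ha.const_mul π).pow 2).mul (tendsto_nhds_of_tendsto_nhdsWithin hx)
  rw [mul_zero] at hlim
  refine hlim.congr' ?_
  filter_upwards [hx.eventually self_mem_nhdsWithin] with i hxi
  have : x i ≠ 0 := (mem_Ioi.1 hxi).ne'
  field_simp

variable {x₁ x₂ a₁ a₂ : ι → ℝ} {lam₁ lam₂ : ℝ}

lemma tendsto_psiMajorant (hx₁ : Tendsto x₁ l (𝓝 0)) (hx₂ : Tendsto x₂ l (𝓝 0))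
    (ha₁ : Tendsto a₁ l (𝓝 lam₁)) (ha₂ : Tendsto a₂ l (𝓝 lam₂))
    (hlam₁ : 0 ≤ lam₁) (hlam₂ : 0 ≤ lam₂) :
    Tendsto (fun i => psiMajorant (x₁ i) (x₂ i) (a₁ i) (a₂ i)) l
      (𝓝 (genBinom (lam₁ + lam₂) lam₁)⁻¹) := by
  have hρ₁ : Tendsto (fun i => a₁ i * x₁ i) l (𝓝 0) := by simpa using ha₁.mul hx₁
  have hρ₂ : Tendsto (fun i => a₂ i * x₂ i) l (𝓝 0) := by simpa using ha₂.mul hx₂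
  have hc : Tendsto (fun i => 1 - a₁ i * x₁ i - a₂ i * x₂ i) l (𝓝 1) := by
    simpa using (hρ₁.const_sub 1).sub hρ₂
  have hdenom : normalizedMvBeta 0 0 1 = 1 := by simp [normalizedMvBeta]
  have hlim := (tendsto_normalizedMvBeta ha₁ ha₂ hc hlam₁ hlam₂ one_pos).div
    (tendsto_normalizedMvBeta hρ₁ hρ₂ hc le_rfl le_rfl one_pos) (hdenom.trans_ne one_ne_zero)
  rwa [hdenom, div_one, normalizedMvBeta_one] at hlim

theorem psi_tendsto_inv_genBinom_general (hx₁ : Tendsto x₁ l (𝓝[>] 0))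
    (hx₂ : Tendsto x₂ l (𝓝[>] 0)) (ha₁ : Tendsto a₁ l (𝓝 lam₁)) (ha₂ : Tendsto a₂ l (𝓝 lam₂))
    (ha₁_pos : ∀ᶠ i in l, 0 < a₁ i) (ha₂_pos : ∀ᶠ i in l, 0 < a₂ i) :
    Tendsto (fun i => Psi (x₁ i) (x₂ i) (a₁ i * x₁ i) (a₂ i * x₂ i)) l
      (𝓝 (genBinom (lam₁ + lam₂) lam₁)⁻¹) := by
  obtain rfl | _ := l.eq_or_neBot
  · exact tendsto_bot
  have hx₁' := tendsto_nhds_of_tendsto_nhdsWithin hx₁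
  have hx₂' := tendsto_nhds_of_tendsto_nhdsWithin hx₂
  have hsum : Tendsto (fun i => a₁ i * x₁ i + a₂ i * x₂ i) l (𝓝 0) := by
    simpa using (ha₁.mul hx₁').add (ha₂.mul hx₂')
  have hmajorant := tendsto_psiMajorant hx₁' hx₂' ha₁ ha₂
    (ge_of_tendsto ha₁ (ha₁_pos.mono fun _ => le_of_lt))
    (ge_of_tendsto ha₂ (ha₂_pos.mono fun _ => le_of_lt))
  have hminorant :=
    ((tendsto_sinc_pi_mul_rpow hx₁ ha₁).mul (tendsto_sinc_pi_mul_rpow hx₂ ha₂)).mul hmajorant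
  rw [one_mul, one_mul] at hminorant
  have hbounds : ∀ᶠ i in l, Psi (x₁ i) (x₂ i) (a₁ i * x₁ i) (a₂ i * x₂ i) ∈
      Icc (sinc (π * (a₁ i * x₁ i)) ^ (1 / x₁ i - 1) * sinc (π * (a₂ i * x₂ i)) ^ (1 / x₂ i - 1) *
        psiMajorant (x₁ i) (x₂ i) (a₁ i) (a₂ i)) (psiMajorant (x₁ i) (x₂ i) (a₁ i) (a₂ i)) := by
    filter_upwards [hx₁.eventually (Ioc_mem_nhdsGT one_pos),
      hx₂.eventually (Ioc_mem_nhdsGT one_pos), ha₁_pos, ha₂_pos,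
      hsum.eventually_lt_const one_pos] with i h₁ h₂ h₃ h₄ h using Psi_mem_Icc h₁ h₂ h₃ h₄ h
  exact tendsto_of_tendsto_of_tendsto_of_le_of_le' hminorant hmajorant
    (hbounds.mono fun _ h => h.1) (hbounds.mono fun _ h => h.2)

end Limit

theorem psi_tendsto_inv_genBinom (lam₁ lam₂ : ℝ) (hlam₁ : 0 < lam₁) (hlam₂ : 0 < lam₂) :
    Tendsto (fun p : ℝ × ℝ => Psi p.1 p.2 (lam₁ * p.1) (lam₂ * p.2))
      (𝓝[{p : ℝ × ℝ | 0 < p.1 ∧ 0 < p.2 ∧ p.1 ≤ 1 ∧ p.2 ≤ 1 ∧ lam₁ * p.1 + lam₂ * p.2 < 1}]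
        (0, 0))
      (𝓝 ((genBinom (lam₁ + lam₂) lam₁)⁻¹)) :=
  psi_tendsto_inv_genBinom_general
    (tendsto_nhdsWithin_iff.2 ⟨(continuous_fst.tendsto _).mono_left nhdsWithin_le_nhds,
      eventually_mem_nhdsWithin.mono fun _ h => h.1⟩)
    (tendsto_nhdsWithin_iff.2 ⟨(continuous_snd.tendsto _).mono_left nhdsWithin_le_nhds,
      eventually_mem_nhdsWithin.mono fun _ h => h.2.1⟩)
    tendsto_const_nhds tendsto_const_nhds (.of_forall fun _ => hlam₁) (.of_forall fun _ => hlam₂)
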